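/- arXiv:2309.06868 — 3 statements merged into one kernel-verified Lean document; each statement's English description precedes it below -/
import Mathlib

section
/- For every non-decreasing bgd-function v : ℕ → ℝ₊ there exist a non-decreasing function w : ℕ → ℝ₊, a real number λ with 1 < λ < 2, and a constant c > 0 such that: (i) w(0) = 1; (ii) for all n ∈ ℕ, 2 ≤ w(n+2) − w(n+1) ≤ 2·(w(n+1) − w(n)); (iii) w(n) ≤ c·λⁿ for all n ∈ ℕ; and (iv) w has the same growth type as v. -/
/-!
Let `d n = v (n + 1) - v n` be the increments of `v`; they satisfy `d (n + 1) ≤ L * d n` and are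
bounded below by `1 / L ^ 2`. Stretch time by a factor `k = m + 1` with `(3/2) ^ m ≥ L`, i.e. repeat
each increment `k` times, after scaling it by `C = 2 * L ^ 2` so that it is at least `2`. Call the
resulting sequence `D`. Its capped version `e` (`cappedSeq`) follows `D` but is never allowed to
grow by more than a factor `3/2` per step. The function `w n = 1 + ∑ i < n, e i` is then normalized
and of growth at most `(3/2) ^ n`.

For the growth type, `e ≤ D` gives `w (k * n) ≤ 1 + k * C * v n`. Conversely, since `D` jumps by a
factor at most `L` between consecutive blocks of length `k`, the sequence `e` has caught up with `D`
at the end of each block (`capped_block_end`); that last term alone shows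
`C * (v n - v 0) ≤ w (k * n)`.
-/

/-- The largest sequence `e` with `e ≤ D`, `e 0 = D 0` and `e (n + 1) ≤ 3/2 * e n`. -/
noncomputable def cappedSeq (D : ℕ → ℝ) : ℕ → ℝ
  | 0 => D 0
  | n + 1 => min (D (n + 1)) (3 / 2 * cappedSeq D n)

lemma capped_le (D : ℕ → ℝ) (n : ℕ) : cappedSeq D n ≤ D n := by
  cases n with
  | zero => exact le_rfl
  | succ n => exact min_le_left _ _

lemma capped_succ_le (D : ℕ → ℝ) (n : ℕ) : cappedSeq D (n + 1) ≤ 3 / 2 * cappedSeq D n :=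
  min_le_right _ _

lemma two_le_capped (D : ℕ → ℝ) (hD : ∀ n, 2 ≤ D n) (n : ℕ) : 2 ≤ cappedSeq D n := by
  induction n with
  | zero => exact hD 0
  | succ n ih => exact le_min (hD _) (by linarith)

/-- Within a block on which `D` is constant, a capped sequence that starts at least at the fraction
`1 / L` of `D` recovers by a factor `3/2` per step until it reaches `D`. -/
lemma capped_in_block (D : ℕ → ℝ) (a : ℕ) (x L : ℝ) (m : ℕ) (hx : 0 ≤ x)
    (hD : ∀ r ≤ m, D (a + r) = x) (h0 : x * min 1 (1 / L) ≤ cappedSeq D a) :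
    ∀ r ≤ m, x * min 1 ((3 / 2) ^ r / L) ≤ cappedSeq D (a + r) := by
  intro r
  induction r with
  | zero => intro _; simpa using h0
  | succ r ih =>
    intro hr
    have h1 := ih (by omega)
    have h2 : D (a + (r + 1)) = x := hD _ hr
    refine le_min ?_ ?_
    · change _ ≤ D (a + (r + 1))
      rw [h2]
      exact mul_le_of_le_one_right hx (min_le_left _ _)
    · have h3 : min 1 ((3 / 2 : ℝ) ^ (r + 1) / L) ≤ 3 / 2 * min 1 ((3 / 2) ^ r / L) := by
        rw [mul_min_of_nonneg _ _ (by norm_num)]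
        refine min_le_min (by norm_num) (le_of_eq ?_)
        rw [pow_succ]; ring
      calc x * min 1 ((3 / 2) ^ (r + 1) / L) ≤ x * (3 / 2 * min 1 ((3 / 2) ^ r / L)) := by gcongr
        _ = 3 / 2 * (x * min 1 ((3 / 2) ^ r / L)) := by ring
        _ ≤ 3 / 2 * cappedSeq D (a + r) := by gcongr

/-- At the end of each block of length `m + 1`, the capped sequence has caught up with the block
value: the deficit factor `L` incurred at the start of the block is absorbed by `(3/2) ^ m`. -/
lemma capped_block_end (b : ℕ → ℝ) (L : ℝ) (m : ℕ) (hL : 1 ≤ L) (hm : L ≤ (3 / 2) ^ m)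
    (hb : ∀ q, 0 ≤ b q) (hbL : ∀ q, b (q + 1) ≤ L * b q) (q : ℕ) :
    b q ≤ cappedSeq (fun n => b (n / (m + 1))) ((m + 1) * q + m) := by
  have hblock : ∀ q, ∀ r ≤ m, b (((m + 1) * q + r) / (m + 1)) = b q := by
    intro q r hr
    rw [Nat.mul_add_div (by omega), Nat.div_eq_of_lt (by omega), add_zero]
  have hfin : min 1 ((3 / 2 : ℝ) ^ m / L) = 1 :=
    min_eq_left ((one_le_div (by linarith)).2 hm)
  have hL1 : 1 / L ≤ 1 := (div_le_one (by linarith)).2 hL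
  have hstart : min 1 (1 / L) = 1 / L := min_eq_right hL1
  -- It suffices to control the first term of the block.
  have key : ∀ q, b q * min 1 (1 / L) ≤ cappedSeq (fun n => b (n / (m + 1))) ((m + 1) * q) →
      b q ≤ cappedSeq (fun n => b (n / (m + 1))) ((m + 1) * q + m) := by
    intro q h
    have := capped_in_block _ ((m + 1) * q) (b q) L m (hb q) (hblock q) h m le_rfl
    rwa [hfin, mul_one] at this
  induction q with
  | zero =>
    apply key
    simpa [cappedSeq] using mul_le_of_le_one_right (hb 0) (min_le_left 1 (1 / L))
  | succ q ih =>
    apply key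
    have e1 : (m + 1) * (q + 1) = (m + 1) * q + m + 1 := by ring
    have e2 : b (((m + 1) * q + m + 1) / (m + 1)) = b (q + 1) := by
      rw [← e1]; simp
    rw [hstart, e1]
    refine le_min ?_ ?_
    · change _ ≤ b (((m + 1) * q + m + 1) / (m + 1))
      rw [e2]
      exact mul_le_of_le_one_right (hb _) hL1
    · have h1 : b (q + 1) * (1 / L) ≤ b q := by
        rw [mul_one_div, div_le_iff₀ (by linarith)]
        linarith [hbL q]
      linarith [hb q]

/-- For every non-decreasing bgd-function `v : ℕ → ℝ₊` there is a non-decreasing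
function `w` with `w 0 = 1`, `2 ≤ w(n+2) - w(n+1) ≤ 2(w(n+1) - w(n))`,
`w n ≤ c * λ^n` for some `1 < λ < 2`, `c > 0`, and `w` has the same growth type as `v`. -/
theorem exists_normalized_bgd_same_growth_type
    (v : ℕ → ℝ) (hvpos : ∀ n, 0 < v n) (hvmono : Monotone v)
    (L : ℕ) (hL : 0 < L)
    (hbgd : ∀ n : ℕ, (1 : ℝ) / L ≤ v (n + 2) - v (n + 1) ∧
      v (n + 2) - v (n + 1) ≤ L * (v (n + 1) - v n)) :
    ∃ (w : ℕ → ℝ) (lam c : ℝ),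
      Monotone w ∧ (∀ n, 0 < w n) ∧
      1 < lam ∧ lam < 2 ∧ 0 < c ∧
      w 0 = 1 ∧
      (∀ n : ℕ, 2 ≤ w (n + 2) - w (n + 1) ∧
        w (n + 2) - w (n + 1) ≤ 2 * (w (n + 1) - w n)) ∧
      (∀ n : ℕ, w n ≤ c * lam ^ n) ∧
      (∃ A : ℕ, 1 ≤ A ∧ ∀ n : ℕ,
        w n ≤ A * v (A * n + A) + A ∧ v n ≤ A * w (A * n + A) + A) := by
  have hL1 : (1 : ℝ) ≤ L := by exact_mod_cast hL
  obtain ⟨m, hm⟩ := pow_unbounded_of_one_lt (L : ℝ) (by norm_num : (1 : ℝ) < 3 / 2)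
  -- The scaled increments of `v`.
  set b : ℕ → ℝ := fun q => 2 * (L : ℝ) ^ 2 * (v (q + 1) - v q) with hbdef
  have hd : ∀ q, 1 ≤ (L : ℝ) ^ 2 * (v (q + 1) - v q) := by
    intro q
    have h1 : 1 ≤ (v (q + 2) - v (q + 1)) * L := (div_le_iff₀ (by linarith)).1 (hbgd q).1
    have h2 := mul_le_mul_of_nonneg_right (hbgd q).2 (by linarith : (0 : ℝ) ≤ L)
    nlinarith
  have hb2 : ∀ q, 2 ≤ b q := fun q => by simp only [hbdef]; linarith [hd q]
  have hbL : ∀ q, b (q + 1) ≤ L * b q := by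
    intro q
    have := mul_le_mul_of_nonneg_left (hbgd q).2 (by positivity : (0 : ℝ) ≤ 2 * (L : ℝ) ^ 2)
    simp only [hbdef]
    linarith
  set e := cappedSeq (fun n => b (n / (m + 1))) with hedef
  have he2 : ∀ n, 2 ≤ e n := two_le_capped _ (fun n => hb2 _)
  have hes : ∀ n, e (n + 1) ≤ 3 / 2 * e n := capped_succ_le _
  have heb : ∀ q, ∀ r < m + 1, e ((m + 1) * q + r) ≤ b q := by
    intro q r hr
    refine (capped_le _ _).trans_eq ?_
    rw [Nat.mul_add_div (by omega), Nat.div_eq_of_lt hr, add_zero]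
  have hend : ∀ q, b q ≤ e ((m + 1) * q + m) :=
    capped_block_end b L m hL1 hm.le (fun q => by linarith [hb2 q]) hbL
  set w : ℕ → ℝ := fun n => 1 + ∑ i ∈ Finset.range n, e i with hwdef
  have hw0 : w 0 = 1 := by simp [hwdef]
  have hws : ∀ n, w (n + 1) = w n + e n := by
    intro n; simp only [hwdef, Finset.sum_range_succ]; ring
  have hwmono : Monotone w := monotone_nat_of_le_succ fun n => by rw [hws]; linarith [he2 n]
  have hwpos : ∀ n, 0 < w n := fun n => by linarith [hwmono (Nat.zero_le n)]
  have hepow : ∀ n, e n ≤ e 0 * (3 / 2) ^ n := by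
    intro n
    induction n with
    | zero => simp
    | succ n ih => rw [pow_succ]; linarith [hes n]
  have hwpow : ∀ n, w n ≤ (1 + 2 * e 0) * (3 / 2) ^ n := by
    intro n
    induction n with
    | zero => rw [hw0]; linarith [he2 0]
    | succ n ih =>
      have : (0 : ℝ) < (3 / 2) ^ n := by positivity
      rw [hws, pow_succ]; linarith [hepow n]
  have hupper : ∀ n, w ((m + 1) * n) ≤ 1 + (m + 1) * (2 * (L : ℝ) ^ 2) * (v n - v 0) := by
    intro n
    induction n with
    | zero => simp [hw0]
    | succ n ih =>
      have hin : ∀ r ≤ m + 1, w ((m + 1) * n + r) ≤ w ((m + 1) * n) + r * b n := by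
        intro r
        induction r with
        | zero => simp
        | succ r ihr =>
          intro hr
          rw [← add_assoc, hws]
          push_cast
          linarith [ihr (by omega), heb n r (by omega)]
      have h := hin (m + 1) le_rfl
      rw [show (m + 1) * (n + 1) = (m + 1) * n + (m + 1) by ring]
      push_cast at h
      simp only [hbdef] at h
      linarith
  have hlower : ∀ n, 2 * (L : ℝ) ^ 2 * (v n - v 0) ≤ w ((m + 1) * n) := by
    intro n
    induction n with
    | zero => simpa using (hwpos 0).le
    | succ n ih =>
      rw [show (m + 1) * (n + 1) = (m + 1) * n + m + 1 by ring, hws]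
      have h1 := hend n
      simp only [hbdef] at h1
      have h2 := hwmono (Nat.le_add_right ((m + 1) * n) m)
      linarith
  refine ⟨w, 3 / 2, 1 + 2 * e 0, hwmono, hwpos, by norm_num, by norm_num,
    by linarith [he2 0], hw0, ?_, hwpow, ?_⟩
  · intro n
    have h1 := hws n
    have h2 := hws (n + 1)
    exact ⟨by linarith [he2 (n + 1)], by linarith [hes n, he2 n]⟩
  · obtain ⟨N, hN⟩ := exists_nat_ge (v 0)
    refine ⟨(m + 1) * (2 * L ^ 2) + N, ?_, ?_⟩
    · have : 0 < (m + 1) * (2 * L ^ 2) := by positivity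
      omega
    intro n
    set A := (m + 1) * (2 * L ^ 2) + N with hA
    have hL2 : 1 ≤ 2 * L ^ 2 := Nat.succ_le_of_lt (by positivity)
    have hmA : m + 1 ≤ A := by nlinarith
    have hkA : (m + 1) * n ≤ A * n + A := by nlinarith
    have hnA : n ≤ A * n + A := by nlinarith
    have hA1 : (1 : ℝ) ≤ A := by exact_mod_cast (by omega : 1 ≤ A)
    have hAR : (A : ℝ) = (m + 1) * (2 * (L : ℝ) ^ 2) + N := by rw [hA]; push_cast; ring
    constructor
    · have h1 : w n ≤ w ((m + 1) * n) := hwmono (by nlinarith)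
      have h2 := hupper n
      have h3 : ((m : ℝ) + 1) * (2 * (L : ℝ) ^ 2) * (v n - v 0) ≤ A * v n :=
        mul_le_mul (by rw [hAR]; linarith [Nat.cast_nonneg (α := ℝ) N])
          (by linarith [hvpos 0]) (by linarith [hvmono (Nat.zero_le n)]) (by linarith)
      have h4 : (A : ℝ) * v n ≤ A * v (A * n + A) := by gcongr; exact hvmono hnA
      linarith
    · have h1 := hlower n
      have h2 : v n - v 0 ≤ 2 * (L : ℝ) ^ 2 * (v n - v 0) :=
        le_mul_of_one_le_left (by linarith [hvmono (Nat.zero_le n)]) (by exact_mod_cast hL2)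
      have h3 := hwmono hkA
      have h4 : w (A * n + A) ≤ A * w (A * n + A) := le_mul_of_one_le_left (hwpos _).le hA1
      have h5 : (N : ℝ) ≤ A := by exact_mod_cast (by omega : N ≤ A)
      linarith
end

section
/- For every real number λ > 1 there exists T₀ > 2 such that for every real T ≥ T₀ there exists an infinitely differentiable function f : ℝ → ℝ satisfying: f(t) = 1 for all t ≤ 1; f(t) = λ for all t ≥ T − 1; f′(t) > 0 for all t ∈ (1, T − 1); 1 ≤ f(t) ≤ λ for all t ∈ ℝ; and |f″(t)| ≤ f(t) for all t ∈ ℝ. -/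
/-!
With `s = Real.smoothTransition`, take `f t = 1 + (lam - 1) * s ((t - 1) / (T - 2))`. Every
requirement except the bound on `f''` is inherited from `s`, positivity of `f'` through
`smoothTransition_deriv_pos`. The second derivative of `s` is continuous and vanishes off `[0, 1]`,
hence is bounded by some `M`, so that `|f''| ≤ (lam - 1) * M / (T - 2) ^ 2`, which is at most
`1 ≤ f` as soon as `T - 2 ≥ 1 + (lam - 1) * M`.
-/

theorem expNegInvGlue_hasDerivAt_of_pos {x : ℝ} (hx : 0 < x) :
    HasDerivAt expNegInvGlue (expNegInvGlue x / x ^ 2) x := by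
  have h := expNegInvGlue.hasDerivAt_polynomial_eval_inv_mul 1 x
  simp only [Polynomial.eval_one, one_mul, Polynomial.derivative_one, sub_zero, mul_one,
    Polynomial.eval_pow, Polynomial.eval_X] at h
  convert h using 1
  field_simp

/-- With `g = expNegInvGlue` and `s x = g x / (g x + g (1 - x))`, the numerator of `s'` is
`g' x * g (1 - x) + g x * g' (1 - x)`, in which every factor is positive. -/
theorem smoothTransition_deriv_pos {x : ℝ} (h0 : 0 < x) (h1 : x < 1) :
    0 < deriv Real.smoothTransition x := by
  have hx1 : 0 < 1 - x := by linarith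
  have ha := expNegInvGlue_hasDerivAt_of_pos h0
  have hb : HasDerivAt (fun y : ℝ => expNegInvGlue (1 - y))
      (-(expNegInvGlue (1 - x) / (1 - x) ^ 2)) x := by
    have h := (expNegInvGlue_hasDerivAt_of_pos hx1).comp x ((hasDerivAt_id x).const_sub 1)
    rw [mul_neg_one] at h
    exact h
  have hs : HasDerivAt Real.smoothTransition _ x :=
    ha.div (ha.add hb) (Real.smoothTransition.pos_denom x).ne'
  have pa := expNegInvGlue.pos_of_pos h0
  have pb := expNegInvGlue.pos_of_pos hx1
  rw [hs.deriv]
  apply div_pos _ (by positivity)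
  have : 0 < expNegInvGlue x / x ^ 2 * expNegInvGlue (1 - x)
      + expNegInvGlue x * (expNegInvGlue (1 - x) / (1 - x) ^ 2) := by positivity
  linarith

theorem smoothTransition_deriv2_bounded :
    ∃ M : ℝ, 0 ≤ M ∧ ∀ x, |deriv (deriv Real.smoothTransition) x| ≤ M := by
  have hc : Continuous (deriv (deriv Real.smoothTransition)) := by
    have h2 : ContDiff ℝ 2 Real.smoothTransition := Real.smoothTransition.contDiff (n := 2)
    have := h2.continuous_iteratedDeriv 2 le_rfl
    simpa [iteratedDeriv_succ, iteratedDeriv_zero] using this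
  obtain ⟨M, hM⟩ := (isCompact_Icc (a := (0 : ℝ)) (b := 1)).exists_bound_of_continuousOn
    hc.continuousOn
  have hM0 : 0 ≤ M := (norm_nonneg _).trans (hM 0 (by simp))
  refine ⟨M, hM0, fun x => ?_⟩
  -- Off `[0, 1]` the function `s` is locally constant.
  have hconst : ∀ c : ℝ, (Real.smoothTransition =ᶠ[nhds x] fun _ => c) →
      |deriv (deriv Real.smoothTransition) x| ≤ M := by
    intro c h
    rw [h.deriv.deriv_eq]
    simpa using hM0
  rcases lt_or_ge x 0 with h | h
  · apply hconst 0
    filter_upwards [Iio_mem_nhds h] with y hy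
    exact Real.smoothTransition.zero_of_nonpos (le_of_lt hy)
  rcases lt_or_ge 1 x with h' | h'
  · apply hconst 1
    filter_upwards [Ioi_mem_nhds h'] with y hy
    exact Real.smoothTransition.one_of_one_le (le_of_lt hy)
  · exact hM x ⟨h, h'⟩

/-- The warping function: for every `λ > 1` there is `T₀ > 2` such that for every `T ≥ T₀`
there is a smooth `f : ℝ → ℝ` with `f = 1` on `(-∞, 1]`, `f = λ` on `[T-1, ∞)`,
`f' > 0` on `(1, T-1)`, `1 ≤ f ≤ λ` everywhere, and `|f''| ≤ f` everywhere. -/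
theorem exists_warping_function (lam : ℝ) (hlam : 1 < lam) :
    ∃ T₀ : ℝ, 2 < T₀ ∧ ∀ T : ℝ, T₀ ≤ T →
      ∃ f : ℝ → ℝ, ContDiff ℝ (⊤ : ℕ∞) f ∧
        (∀ t : ℝ, t ≤ 1 → f t = 1) ∧
        (∀ t : ℝ, T - 1 ≤ t → f t = lam) ∧
        (∀ t ∈ Set.Ioo (1 : ℝ) (T - 1), 0 < deriv f t) ∧
        (∀ t : ℝ, 1 ≤ f t ∧ f t ≤ lam) ∧
        (∀ t : ℝ, |deriv (deriv f) t| ≤ f t) := by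
  obtain ⟨M, hM0, hM⟩ := smoothTransition_deriv2_bounded
  have hl : 0 < lam - 1 := by linarith
  have hlM : 0 ≤ (lam - 1) * M := by positivity
  refine ⟨3 + (lam - 1) * M, by linarith, fun T hT => ?_⟩
  have hK : 0 < T - 2 := by linarith
  have hsm : ContDiff ℝ 2 Real.smoothTransition := Real.smoothTransition.contDiff (n := 2)
  have hd1 : Differentiable ℝ Real.smoothTransition := hsm.differentiable (by norm_num)
  have hd2 : Differentiable ℝ (deriv Real.smoothTransition) := by
    have := hsm.differentiable_iteratedDeriv 1 (by norm_num)
    simpa [iteratedDeriv_one] using this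
  have hin : ∀ t : ℝ, HasDerivAt (fun t : ℝ => (t - 1) / (T - 2)) (1 / (T - 2)) t := fun t =>
    ((hasDerivAt_id t).sub_const 1).div_const _
  have hf1 : deriv (fun t : ℝ => 1 + (lam - 1) * Real.smoothTransition ((t - 1) / (T - 2))) =
      fun t => (lam - 1) * (deriv Real.smoothTransition ((t - 1) / (T - 2)) * (1 / (T - 2))) := by
    funext t
    exact ((((hd1 _).hasDerivAt.comp t (hin t)).const_mul (lam - 1)).const_add 1).deriv
  have hf2 : ∀ t, deriv (fun t => (lam - 1) *
      (deriv Real.smoothTransition ((t - 1) / (T - 2)) * (1 / (T - 2)))) t =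
      (lam - 1) * (deriv (deriv Real.smoothTransition) ((t - 1) / (T - 2)) * (1 / (T - 2))
        * (1 / (T - 2))) := fun t =>
    ((((hd2 _).hasDerivAt.comp t (hin t)).mul_const (1 / (T - 2))).const_mul (lam - 1)).deriv
  have hrange : ∀ t : ℝ, 1 ≤ 1 + (lam - 1) * Real.smoothTransition ((t - 1) / (T - 2)) ∧
      1 + (lam - 1) * Real.smoothTransition ((t - 1) / (T - 2)) ≤ lam := by
    intro t
    have h0 := Real.smoothTransition.nonneg ((t - 1) / (T - 2))
    have h1 := Real.smoothTransition.le_one ((t - 1) / (T - 2))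
    constructor <;> nlinarith
  refine ⟨fun t => 1 + (lam - 1) * Real.smoothTransition ((t - 1) / (T - 2)), ?_, ?_, ?_, ?_,
    hrange, ?_⟩
  · exact contDiff_const.add (contDiff_const.mul (Real.smoothTransition.contDiff.comp
      ((contDiff_id.sub contDiff_const).div_const _)))
  · intro t ht
    have : (t - 1) / (T - 2) ≤ 0 := div_nonpos_of_nonpos_of_nonneg (by linarith) hK.le
    simp [Real.smoothTransition.zero_of_nonpos this]
  · intro t ht
    have : 1 ≤ (t - 1) / (T - 2) := by rw [le_div_iff₀ hK]; linarith
    simp [Real.smoothTransition.one_of_one_le this]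
  · rintro t ⟨h1, h2⟩
    rw [hf1]
    have := smoothTransition_deriv_pos (x := (t - 1) / (T - 2)) (div_pos (by linarith) hK)
      (by rw [div_lt_one hK]; linarith)
    positivity
  · intro t
    refine le_trans ?_ (hrange t).1
    rw [hf1, hf2, abs_mul, abs_mul, abs_mul, abs_of_pos hl, abs_of_pos (one_div_pos.2 hK)]
    calc _ ≤ (lam - 1) * (M * (1 / (T - 2)) * (1 / (T - 2))) := by gcongr; exact hM _
      _ = (lam - 1) * M / (T - 2) ^ 2 := by field_simp
      _ ≤ 1 := by
        rw [div_le_one (by positivity)]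
        nlinarith
end

section
/- Let (X, d) be a metric space equipped with a Borel measure μ. Let r₀ ≥ 0, let v be a positive real-valued function on (r₀, ∞) satisfying v(2r) ≤ K·v(r) for all r > r₀ with constant K ≥ 1, and suppose there are constants A, B > 0 and α ≥ 0 such that for every x ∈ X and every real r > r₀, A·v(r) ≤ μ(B(x, r)) ≤ B·v(r)·r^α. Then for every r > r₀ and every finite family of points x₁, …, x_N ∈ X such that the open balls B(x_i, r) are pairwise disjoint and d(x_i, x₁) ≤ 3r for every i, one has N ≤ (B/A)·K²·(4r)^α. -/
open MeasureTheory

/-!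
The disjoint balls `B(x_i, r)` all lie in `B(x₁, 4r)`, so additivity of `μ` gives
`N·A·v(r) ≤ μ(B(x₁, 4r)) ≤ B·v(4r)·(4r)^α`. Doubling twice bounds `v(4r)` by `K²·v(r)`,
and dividing by `A·v(r) > 0` gives the claim.
-/

/-- Packing bound: under a two-sided comparison `A·v(r) ≤ μ(B(x,r)) ≤ B·v(r)·r^α`
with `v` doubling, any family of pairwise disjoint balls of radius `r` whose centres
lie within distance `3r` of the first one has at most `(B/A)·K²·(4r)^α` members. -/
theorem packing_bound
    {X : Type*} [MetricSpace X] [MeasurableSpace X] [BorelSpace X]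
    (μ : Measure X)
    (r₀ : ℝ) (hr₀ : 0 ≤ r₀)
    (v : ℝ → ℝ) (hvpos : ∀ r : ℝ, r₀ < r → 0 < v r)
    (K : ℝ) (hK : 1 ≤ K) (hdbl : ∀ r : ℝ, r₀ < r → v (2 * r) ≤ K * v r)
    (A B α : ℝ) (hA : 0 < A) (hB : 0 < B) (hα : 0 ≤ α)
    (hcomp : ∀ (x : X) (r : ℝ), r₀ < r →
      ENNReal.ofReal (A * v r) ≤ μ (Metric.ball x r) ∧
      μ (Metric.ball x r) ≤ ENNReal.ofReal (B * v r * r ^ α)) :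
    ∀ r : ℝ, r₀ < r → ∀ (N : ℕ) (hN : N ≠ 0) (x : Fin N → X),
      (Pairwise fun i j => Disjoint (Metric.ball (x i) r) (Metric.ball (x j) r)) →
      (∀ i : Fin N, dist (x i) (x ⟨0, Nat.pos_of_ne_zero hN⟩) ≤ 3 * r) →
      (N : ℝ) ≤ (B / A) * K ^ 2 * (4 * r) ^ α := by
  intro r hr N hN x hdisj hdist
  have hrpos : 0 < r := hr₀.trans_lt hr
  set o : X := x ⟨0, Nat.pos_of_ne_zero hN⟩
  have hsub : (⋃ i, Metric.ball (x i) r) ⊆ Metric.ball o (4 * r) :=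
    Set.iUnion_subset fun i => Metric.ball_subset_ball' (by linarith [hdist i])
  have hv : v (4 * r) ≤ K ^ 2 * v r := by
    have h1 := hdbl r hr
    have h2 := hdbl (2 * r) (by linarith)
    rw [show 2 * (2 * r) = 4 * r by ring] at h2
    nlinarith
  have hv4 : 0 < v (4 * r) := hvpos _ (by linarith)
  have hpow : 0 ≤ (4 * r) ^ α := by positivity
  have hmeas : ENNReal.ofReal (N * (A * v r)) ≤
      ENNReal.ofReal (B * v (4 * r) * (4 * r) ^ α) := by
    calc ENNReal.ofReal (N * (A * v r)) = ∑ _i : Fin N, ENNReal.ofReal (A * v r) := by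
          simp [ENNReal.ofReal_mul]
      _ ≤ ∑ i, μ (Metric.ball (x i) r) := Finset.sum_le_sum fun i _ => (hcomp (x i) r hr).1
      _ = μ (⋃ i, Metric.ball (x i) r) := by
          rw [measure_iUnion hdisj fun i => measurableSet_ball, tsum_fintype]
      _ ≤ μ (Metric.ball o (4 * r)) := measure_mono hsub
      _ ≤ _ := (hcomp o (4 * r) (by linarith)).2
  have hreal := (ENNReal.ofReal_le_ofReal_iff (by positivity)).1 hmeas
  have hvr : 0 < v r := hvpos r hr
  have hfin : N * (A * v r) ≤ B * (K ^ 2 * v r) * (4 * r) ^ α :=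
    hreal.trans (by gcongr)
  rw [← mul_le_mul_iff_left₀ (mul_pos hA hvr)]
  calc N * (A * v r) ≤ B * (K ^ 2 * v r) * (4 * r) ^ α := hfin
    _ = B / A * K ^ 2 * (4 * r) ^ α * (A * v r) := by field_simp
end
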